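/- arXiv:2506.04187 — 2 statements merged into one kernel-verified Lean document; each statement's English description precedes it below -/
import Mathlib

section
/- Let ψ:ℕ→ℝ≥0 be decreasing with ∑_{q=1}^∞ ψ(q) = ∞, and let γ=(γ_q)_{q≥1} be a sequence of real numbers for which there exists γ₀∈ℝ with ∑_{q=1}^∞ |γ_q − γ₀| < ∞. Then meas(W(ψ,γ)) = 1. -/
/-!
The heart of the matter is Szüsz's theorem, the case of the constant sequence `γ₀`. By an
inhomogeneous version of Dirichlet's theorem, a real `α` whose Dirichlet approximation at level `N`
has denominator comparable to `N` lies within `20 / N²` of a point `(a + γ₀) / q` with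
`N ≤ q < 2N`, and the remaining `α` fill only a small part of any given ball once `N` is large.
Maximal `20 / N²`-separated sets of such points, for `N` running over powers of two, yield events
that are quasi-independent on average, so by the Chung–Erdős inequality the limsup set has
proportion bounded below in every ball. By the Lebesgue density theorem it has full measure.

Passing from `γ₀` to `γ_q` matters only for those `α` with `‖q α - γ₀‖` in the shell
`[ψ q - |γ_q - γ₀|, ψ q)`. The measures of these sets are summable, so Borel–Cantelli discards them.
-/

open MeasureTheory

/-- Distance from a real number to the nearest integer. -/
noncomputable def distNearestInt (x : ℝ) : ℝ := |x - round x|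

/-- The set of `α ∈ [0,1]` with `‖qα - γ_q‖ < ψ q` for infinitely many `q ≥ 1`. -/
def WSet (ψ : ℕ → ℝ) (γ : ℕ → ℝ) : Set ℝ :=
  {α | α ∈ Set.Icc (0:ℝ) 1 ∧
    {q : ℕ | 1 ≤ q ∧ distNearestInt (q * α - γ q) < ψ q}.Infinite}

open Metric Filter Topology Set

/-! ### Second moments and separated points -/

theorem sq_lintegral_le_measure_mul_lintegral_sq {α : Type*} [MeasurableSpace α] (μ : Measure α)
    {f : α → ENNReal} (hf : AEMeasurable f μ) {U : Set α} (hU : f.support ⊆ U) :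
    (∫⁻ x, f x ∂μ) ^ 2 ≤ μ U * ∫⁻ x, f x ^ 2 ∂μ := by
  have hU_sq : (fun x => f x ^ 2).support ⊆ U :=
    fun x hx => hU fun hfx => hx (by simp only [hfx, zero_pow two_ne_zero])
  have cauchy_schwarz := ENNReal.lintegral_mul_le_Lp_mul_Lq (μ.restrict U) .two_two
    aemeasurable_one hf.restrict
  simp only [Pi.mul_apply, one_mul, ENNReal.rpow_two, setLIntegral_eq_of_support_subset hU,
    setLIntegral_eq_of_support_subset hU_sq] at cauchy_schwarz
  rwa [← ENNReal.mul_rpow_of_nonneg _ _ (by norm_num), one_div,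
    ENNReal.le_rpow_inv_iff two_pos, ENNReal.rpow_two, one_pow, setLIntegral_one] at cauchy_schwarz

theorem lintegral_sq_sum_indicator {α ι : Type*} [MeasurableSpace α] (μ : Measure α)
    (s : Finset ι) {E : ι → Set α} (hE : ∀ i ∈ s, MeasurableSet (E i)) :
    ∫⁻ x, (∑ i ∈ s, (E i).indicator 1 x) ^ 2 ∂μ = ∑ i ∈ s, ∑ j ∈ s, μ (E i ∩ E j) := by
  have hmeas (i) (hi : i ∈ s) (j) (hj : j ∈ s) :
      Measurable ((E i ∩ E j).indicator (1 : α → ENNReal)) :=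
    measurable_one.indicator ((hE i hi).inter (hE j hj))
  calc ∫⁻ x, (∑ i ∈ s, (E i).indicator 1 x) ^ 2 ∂μ
    _ = ∫⁻ x, ∑ i ∈ s, ∑ j ∈ s, (E i ∩ E j).indicator 1 x ∂μ := by
      simp only [sq, Finset.sum_mul_sum, inter_indicator_one, Pi.mul_apply]
    _ = ∑ i ∈ s, ∑ j ∈ s, ∫⁻ x, (E i ∩ E j).indicator 1 x ∂μ := by
      rw [lintegral_finsetSum' _ fun i hi =>
        (Finset.measurable_sum _ fun j hj => hmeas i hi j hj).aemeasurable]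
      exact Finset.sum_congr rfl fun i hi =>
        lintegral_finsetSum' _ fun j hj => (hmeas i hi j hj).aemeasurable
    _ = ∑ i ∈ s, ∑ j ∈ s, μ (E i ∩ E j) :=
      Finset.sum_congr rfl fun i hi => Finset.sum_congr rfl fun j hj =>
        lintegral_indicator_one ((hE i hi).inter (hE j hj))

-- The Chung–Erdős inequality.
theorem sq_sum_measure_le_measure_biUnion_mul {α ι : Type*} [MeasurableSpace α] (μ : Measure α)
    (s : Finset ι) {E : ι → Set α} (hE : ∀ i ∈ s, MeasurableSet (E i)) :
    (∑ i ∈ s, μ (E i)) ^ 2 ≤ μ (⋃ i ∈ s, E i) * ∑ i ∈ s, ∑ j ∈ s, μ (E i ∩ E j) := by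
  have hmeas (i) (hi : i ∈ s) : Measurable ((E i).indicator (1 : α → ENNReal)) :=
    measurable_one.indicator (hE i hi)
  have hsupport : (fun x => ∑ i ∈ s, (E i).indicator (1 : α → ENNReal) x).support ⊆
      ⋃ i ∈ s, E i := fun x hx => by
    obtain ⟨i, hi, hxi⟩ := Finset.exists_ne_zero_of_sum_ne_zero hx
    exact mem_biUnion hi (mem_of_indicator_ne_zero hxi)
  have first_moment : ∫⁻ x, ∑ i ∈ s, (E i).indicator 1 x ∂μ = ∑ i ∈ s, μ (E i) := by
    rw [lintegral_finsetSum' _ fun i hi => (hmeas i hi).aemeasurable]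
    exact Finset.sum_congr rfl fun i hi => lintegral_indicator_one (hE i hi)
  rw [← first_moment, ← lintegral_sq_sum_indicator μ s hE]
  exact sq_lintegral_le_measure_mul_lintegral_sq μ
    (Finset.measurable_sum _ hmeas).aemeasurable hsupport

theorem sq_sum_measureReal_le_measureReal_biUnion_mul {α ι : Type*} [MeasurableSpace α]
    (μ : Measure α) (s : Finset ι) {E : ι → Set α} (hE : ∀ i ∈ s, MeasurableSet (E i))
    (hE_fin : ∀ i ∈ s, μ (E i) ≠ ⊤) :
    (∑ i ∈ s, μ.real (E i)) ^ 2 ≤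
      μ.real (⋃ i ∈ s, E i) * ∑ i ∈ s, ∑ j ∈ s, μ.real (E i ∩ E j) := by
  have inter_fin (i) (hi : i ∈ s) (j) : μ (E i ∩ E j) ≠ ⊤ :=
    measure_ne_top_of_subset inter_subset_left (hE_fin i hi)
  have row_fin (i) (hi : i ∈ s) : ∑ j ∈ s, μ (E i ∩ E j) ≠ ⊤ :=
    ENNReal.sum_ne_top.2 fun j _ => inter_fin i hi j
  have union_fin : μ (⋃ i ∈ s, E i) ≠ ⊤ :=
    (measure_biUnion_lt_top s.finite_toSet fun i hi => (hE_fin i hi).lt_top).ne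
  have h := ENNReal.toReal_mono (ENNReal.mul_ne_top union_fin (ENNReal.sum_ne_top.2 row_fin))
    (sq_sum_measure_le_measure_biUnion_mul μ s hE)
  rw [ENNReal.toReal_pow, ENNReal.toReal_mul, ENNReal.toReal_sum hE_fin,
    ENNReal.toReal_sum row_fin] at h
  rwa [Finset.sum_congr rfl fun i hi => ENNReal.toReal_sum fun j _ => inter_fin i hi j] at h

theorem sum_sum_le_two_mul_sum_sum_filter_le {ι : Type*} [LinearOrder ι] (s : Finset ι)
    {g : ι → ι → ℝ} (hg : ∀ i j, 0 ≤ g i j) (hsymm : ∀ i j, g i j = g j i) :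
    ∑ i ∈ s, ∑ j ∈ s, g i j ≤ 2 * ∑ i ∈ s, ∑ j ∈ s with j ≤ i, g i j := by
  have hswap : ∑ i ∈ s, ∑ j ∈ s with j ≤ i, g i j = ∑ i ∈ s, ∑ j ∈ s with i ≤ j, g i j := by
    simp only [Finset.sum_filter]
    rw [Finset.sum_comm]
    simp only [hsymm]
  rw [two_mul]
  nth_rw 2 [hswap]
  rw [← Finset.sum_add_distrib]
  refine Finset.sum_le_sum fun i _ => ?_
  simp only [Finset.sum_filter, ← Finset.sum_add_distrib]
  refine Finset.sum_le_sum fun j _ => ?_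
  have := hg i j
  rcases le_total i j with h | h <;> simp only [h, if_true] <;> split_ifs <;> linarith

theorem sum_filter_le_half_pow_sub_le (s : Finset ℕ) (n : ℕ) :
    ∑ m ∈ s with m ≤ n, (1 / 2 : ℝ) ^ (n - m) ≤ 2 := calc
  _ ≤ ∑ m ∈ Finset.range (n + 1), (1 / 2 : ℝ) ^ (n - m) := by
    refine Finset.sum_le_sum_of_subset_of_nonneg (fun m hm => ?_) fun _ _ _ => by positivity
    exact Finset.mem_range_succ_iff.2 (Finset.mem_filter.1 hm).2
  _ = ∑ i ∈ Finset.range (n + 1), (1 / 2 : ℝ) ^ i := Finset.sum_range_reflect _ _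
  _ ≤ 2 := sum_geometric_two_le _

theorem sq_div_le_measureReal_biUnion {α : Type*} [MeasurableSpace α] (μ : Measure α)
    (s : Finset ℕ) {E : ℕ → Set α} {a : ℕ → ℝ} {c C : ℝ}
    (hE : ∀ n ∈ s, MeasurableSet (E n)) (hE_fin : ∀ n ∈ s, μ (E n) ≠ ⊤)
    (hc : 0 ≤ c) (hC : 0 < C) (ha : ∀ n ∈ s, 0 ≤ a n) (hsum : 1 ≤ ∑ n ∈ s, a n)
    (hlower : ∀ n ∈ s, c * a n ≤ μ.real (E n))
    (hpair : ∀ n ∈ s, ∀ m ∈ s, m ≤ n →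
      μ.real (E n ∩ E m) ≤ C * (a n * a m + a n * (1 / 2) ^ (n - m))) :
    c ^ 2 / (6 * C) ≤ μ.real (⋃ n ∈ s, E n) := by
  set T := ∑ n ∈ s, a n
  have first_moment : c * T ≤ ∑ n ∈ s, μ.real (E n) := by
    rw [Finset.mul_sum]; exact Finset.sum_le_sum hlower
  have row_sum (n) (hn : n ∈ s) :
      ∑ m ∈ s with m ≤ n, μ.real (E n ∩ E m) ≤ a n * (C * (T + 2)) := calc
    _ ≤ ∑ m ∈ s with m ≤ n, C * (a n * a m + a n * (1 / 2) ^ (n - m)) :=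
      Finset.sum_le_sum fun m hm =>
        hpair n hn m (Finset.mem_filter.1 hm).1 (Finset.mem_filter.1 hm).2
    _ = a n * (C * (∑ m ∈ s with m ≤ n, a m + ∑ m ∈ s with m ≤ n, (1 / 2) ^ (n - m))) := by
      rw [← Finset.mul_sum, Finset.sum_add_distrib, ← Finset.mul_sum, ← Finset.mul_sum]; ring
    _ ≤ a n * (C * (T + 2)) := by
      have hpartial : ∑ m ∈ s with m ≤ n, a m ≤ T :=
        Finset.sum_le_sum_of_subset_of_nonneg (Finset.filter_subset _ _) fun m hm _ => ha m hm
      have := ha n hn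
      gcongr
      exact sum_filter_le_half_pow_sub_le s n
  have second_moment : ∑ n ∈ s, ∑ m ∈ s, μ.real (E n ∩ E m) ≤ 6 * C * T ^ 2 := calc
    _ ≤ 2 * ∑ n ∈ s, ∑ m ∈ s with m ≤ n, μ.real (E n ∩ E m) :=
      sum_sum_le_two_mul_sum_sum_filter_le s (fun _ _ => measureReal_nonneg)
        fun n m => by rw [inter_comm]
    _ ≤ 2 * ∑ n ∈ s, a n * (C * (T + 2)) := by gcongr with n hn; exact row_sum n hn
    _ = 2 * C * (T * (T + 2)) := by rw [← Finset.sum_mul]; ring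
    _ ≤ 2 * C * (T * (3 * T)) := by gcongr; linarith
    _ = 6 * C * T ^ 2 := by ring
  rw [div_le_iff₀ (by positivity)]
  refine le_of_mul_le_mul_right ?_ (by positivity : 0 < T ^ 2)
  calc c ^ 2 * T ^ 2 = (c * T) ^ 2 := by ring
    _ ≤ (∑ n ∈ s, μ.real (E n)) ^ 2 := by gcongr
    _ ≤ μ.real (⋃ n ∈ s, E n) * ∑ n ∈ s, ∑ m ∈ s, μ.real (E n ∩ E m) :=
      sq_sum_measureReal_le_measureReal_biUnion_mul μ s hE hE_fin
    _ ≤ μ.real (⋃ n ∈ s, E n) * (6 * C * T ^ 2) := by gcongr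
    _ = μ.real (⋃ n ∈ s, E n) * (6 * C) * T ^ 2 := by ring

theorem exists_finset_pairwise_lt_dist_forall_dist_le {X : Type*} [PseudoMetricSpace X] {A : Set X}
    (hA : TotallyBounded A) {δ : ℝ} (hδ : 0 < δ) :
    ∃ J : Finset X, ↑J ⊆ A ∧ (J : Set X).Pairwise (fun p p' => δ < dist p p') ∧
      ∀ a ∈ A, ∃ p ∈ J, dist a p ≤ δ := by
  lift δ to NNReal using hδ.le
  obtain ⟨C, -, hC_fin, hC⟩ :=
    exists_finite_isCover_of_totallyBounded (ε := δ / 2) (half_pos (by exact_mod_cast hδ)).ne' hA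
  have packing_fin : packingNumber δ A ≠ ⊤ := by
    refine ne_top_of_le_ne_top hC_fin.encard_lt_top.ne ?_
    simpa only [mul_div_cancel₀ δ two_ne_zero] using
      (packingNumber_two_mul_le_externalCoveringNumber (δ / 2) A).trans
        hC.externalCoveringNumber_le_encard
  have J_fin : (maximalSeparatedSet δ A).Finite := by
    rwa [← encard_ne_top_iff, encard_maximalSeparatedSet packing_fin]
  refine ⟨J_fin.toFinset, ?_, ?_, fun a ha => ?_⟩
  · rw [J_fin.coe_toFinset]
    exact maximalSeparatedSet_subset
  · rw [J_fin.coe_toFinset]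
    intro p hp p' hp' hne
    have : (δ : ENNReal) < edist p p' := isSeparated_maximalSeparatedSet hp hp' hne
    rwa [edist_nndist, ENNReal.coe_lt_coe] at this
  · obtain ⟨p, hp, hap⟩ := isCover_maximalSeparatedSet packing_fin ha
    have : edist a p ≤ δ := hap
    rw [edist_nndist, ENNReal.coe_le_coe] at this
    exact ⟨p, J_fin.mem_toFinset.2 hp, this⟩

section SeparatedPoints

variable {J : Finset ℝ} {δ : ℝ}

theorem pairwiseDisjoint_ball (hJ : (J : Set ℝ).Pairwise fun p p' => δ < dist p p') {ρ : ℝ}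
    (hρ : ρ ≤ δ / 2) : (J : Set ℝ).PairwiseDisjoint fun p => ball p ρ :=
  fun _ hp _ hp' hne => ball_disjoint_ball (by linarith [hJ hp hp' hne])

theorem measureReal_biUnion_ball (hJ : (J : Set ℝ).Pairwise fun p p' => δ < dist p p') {ρ : ℝ}
    (hρ0 : 0 ≤ ρ) (hρ : ρ ≤ δ / 2) : volume.real (⋃ p ∈ J, ball p ρ) = J.card * (2 * ρ) := by
  rw [measureReal_biUnion_finset (pairwiseDisjoint_ball hJ hρ) (fun _ _ => measurableSet_ball)
    (fun _ _ => measure_ball_lt_top.ne)]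
  simp [Real.volume_real_ball hρ0]

theorem card_mul_le_of_subset_closedBall (hδ : 0 ≤ δ)
    (hJ : (J : Set ℝ).Pairwise fun p p' => δ < dist p p') {y L : ℝ} (hL : 0 ≤ L)
    (hJL : (J : Set ℝ) ⊆ closedBall y L) : J.card * δ ≤ 2 * L + δ := by
  have hsub : ⋃ p ∈ J, ball p (δ / 2) ⊆ ball y (L + δ / 2) :=
    iUnion₂_subset fun p hp => ball_subset_ball' (by linarith [mem_closedBall.1 (hJL hp)])
  calc J.card * δ = volume.real (⋃ p ∈ J, ball p (δ / 2)) := by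
        rw [measureReal_biUnion_ball hJ (by positivity) le_rfl]; ring
    _ ≤ volume.real (ball y (L + δ / 2)) := measureReal_mono hsub measure_ball_lt_top.ne
    _ = 2 * L + δ := by rw [Real.volume_real_ball (by positivity)]; ring

theorem measureReal_biUnion_ball_inter_ball_le (hδ : 0 < δ)
    (hJ : (J : Set ℝ).Pairwise fun p p' => δ < dist p p') {ρ : ℝ} (hρ0 : 0 ≤ ρ) (hρ : ρ ≤ δ / 2)
    (y : ℝ) {R : ℝ} (hR : 0 ≤ R) :
    volume.real ((⋃ p ∈ J, ball p ρ) ∩ ball y R) ≤ 4 * ρ * (R / δ + 1) := by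
  classical
  set J' := J.filter (· ∈ closedBall y (R + ρ))
  have hcover : (⋃ p ∈ J, ball p ρ) ∩ ball y R ⊆ ⋃ p ∈ J', ball p ρ := by
    rintro z ⟨hz, hzy⟩
    obtain ⟨p, hp, hzp⟩ := mem_iUnion₂.1 hz
    refine mem_biUnion (Finset.mem_filter.2 ⟨hp, ?_⟩) hzp
    rw [mem_ball] at hzy hzp
    rw [mem_closedBall]
    linarith [dist_triangle_left p y z]
  have hcard : J'.card ≤ 2 * (R / δ + 1) := by
    have : J'.card * δ ≤ 2 * (R + ρ) + δ :=
      card_mul_le_of_subset_closedBall hδ.le (hJ.mono (J.filter_subset _)) (by positivity)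
        fun p hp => (Finset.mem_filter.1 hp).2
    refine le_of_mul_le_mul_right ?_ hδ
    calc J'.card * δ ≤ 2 * (R + ρ) + δ := this
      _ ≤ 2 * (R + δ) := by linarith
      _ = 2 * (R / δ + 1) * δ := by field_simp
  calc volume.real ((⋃ p ∈ J, ball p ρ) ∩ ball y R)
    _ ≤ volume.real (⋃ p ∈ J', ball p ρ) := measureReal_mono hcover
      (measure_biUnion_lt_top J'.finite_toSet fun _ _ => measure_ball_lt_top).ne
    _ = J'.card * (2 * ρ) := measureReal_biUnion_ball (hJ.mono (J.filter_subset _)) hρ0 hρ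
    _ ≤ 2 * (R / δ + 1) * (2 * ρ) := by gcongr
    _ = 4 * ρ * (R / δ + 1) := by ring

end SeparatedPoints

/-! ### Local ubiquity -/

theorem not_summable_min {f : ℕ → ℝ} (hf0 : ∀ n, 0 ≤ f n) (hf : ¬Summable f) {c : ℝ}
    (hc : 0 < c) : ¬Summable fun n => min (f n) c := by
  refine fun h => hf (h.of_norm_bounded_eventually_nat ?_)
  filter_upwards [h.tendsto_atTop_zero.eventually_lt_const hc] with n hn
  rw [Real.norm_of_nonneg (hf0 n), min_eq_left (min_lt_iff.1 hn |>.resolve_right (lt_irrefl c)).le]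

theorem exists_one_le_sum_Ico {f : ℕ → ℝ} (hf0 : ∀ n, 0 ≤ f n) (hf : ¬Summable f) (m : ℕ) :
    ∃ M, 1 ≤ ∑ n ∈ Finset.Ico m M, f n := by
  rw [← summable_nat_add_iff m, not_summable_iff_tendsto_nat_atTop_of_nonneg fun n => hf0 _] at hf
  obtain ⟨M, hM⟩ := (hf.eventually_ge_atTop 1).exists
  refine ⟨m + M, ?_⟩
  rw [Finset.sum_Ico_eq_sum_range, Nat.add_sub_cancel_left]
  simpa only [add_comm m] using hM

theorem ae_mem_of_frequently_le_measure_inter_closedBall_div {β : Type*} [MetricSpace β]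
    [SecondCountableTopology β] [MeasurableSpace β] [BorelSpace β] [HasBesicovitchCovering β]
    (μ : Measure β) [IsLocallyFiniteMeasure μ] {A : Set β} (hA : MeasurableSet A) {c : ENNReal}
    (hc : c ≠ 0)
    (h : ∀ x, ∃ᶠ r in 𝓝[>] 0, c ≤ μ (A ∩ closedBall x r) / μ (closedBall x r)) :
    ∀ᵐ x ∂μ, x ∈ A := by
  filter_upwards [Besicovitch.ae_tendsto_measure_inter_div_of_measurableSet μ hA] with x hx
  have : c ≤ A.indicator 1 x := ge_of_tendsto_of_frequently hx (h x)
  exact mem_of_indicator_ne_zero ((pos_iff_ne_zero.2 hc).trans_le this).ne'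

theorem le_half_pow_mul_of_le_half {δ : ℕ → ℝ} (hδ : ∀ n, δ (n + 1) ≤ δ n / 2) {m n : ℕ}
    (hmn : m ≤ n) : δ n ≤ (1 / 2) ^ (n - m) * δ m := by
  induction n, hmn using Nat.le_induction with
  | base => simp
  | succ n hmn ih =>
    rw [Nat.succ_sub hmn, pow_succ]
    linarith [hδ n]

theorem tendsto_zero_of_le_half {δ : ℕ → ℝ} (hδ0 : ∀ n, 0 ≤ δ n)
    (hδ : ∀ n, δ (n + 1) ≤ δ n / 2) : Tendsto δ atTop (𝓝 0) := by
  refine squeeze_zero hδ0 (fun n => le_half_pow_mul_of_le_half hδ n.zero_le) ?_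
  simpa only [Nat.sub_zero, zero_mul] using
    (tendsto_pow_atTop_nhds_zero_of_lt_one (by norm_num) (by norm_num)).mul_const (δ 0)

/-- Local ubiquity (Beresnevich–Dickinson–Velani) of the resonant sets `R n` at scales `δ n`: the
`δ n`-neighbourhood of `R n` eventually fills a fixed proportion of every given ball. The threshold
for `n` may depend on the ball. -/
def IsLocallyUbiquitous (R : ℕ → Set ℝ) (δ : ℕ → ℝ) : Prop :=
  ∃ κ > 0, ∀ x r, 0 < r →
    ∀ᶠ n in atTop, κ * r ≤ volume.real (closedBall x r ∩ thickening (δ n) (R n))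

theorem closedBall_inter_thickening_subset {X : Type*} [PseudoMetricSpace X] {A : Set X} {x : X}
    {r δ : ℝ} {J : Finset X} (hδr : δ ≤ r)
    (hJ : ∀ a ∈ A ∩ closedBall x (2 * r), ∃ p ∈ J, dist a p ≤ δ) :
    closedBall x r ∩ thickening δ A ⊆ ⋃ p ∈ J, closedBall p (2 * δ) := by
  rintro y ⟨hyx, hyA⟩
  obtain ⟨a, ha, hya⟩ := mem_thickening_iff.1 hyA
  rw [mem_closedBall] at hyx
  obtain ⟨p, hp, hap⟩ := hJ a ⟨ha, by
    rw [mem_closedBall]; linarith [dist_triangle_left a x y]⟩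
  refine mem_biUnion (Finset.mem_coe.2 hp) (mem_closedBall.2 ?_)
  linarith [dist_triangle y a p]

theorem measureReal_inter_biUnion_ball_le {J J' : Finset ℝ} {δ δ' ρ ρ' y L : ℝ}
    (hδ : 0 < δ) (hδ' : 0 < δ') (hJ : (J : Set ℝ).Pairwise fun p p' => δ < dist p p')
    (hJ' : (J' : Set ℝ).Pairwise fun p p' => δ' < dist p p') (hρ0 : 0 ≤ ρ) (hρ : ρ ≤ δ / 2)
    (hρ' : 0 ≤ ρ') (hL : 0 ≤ L) (hJ'L : (J' : Set ℝ) ⊆ closedBall y L) :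
    volume.real ((⋃ p ∈ J, ball p ρ) ∩ ⋃ p ∈ J', ball p ρ') ≤
      4 * (2 * L + δ') * (ρ / δ * (ρ' / δ') + ρ / δ * (δ / δ')) := by
  have hcard : (J'.card : ℝ) ≤ (2 * L + δ') / δ' :=
    (le_div_iff₀ hδ').2 (card_mul_le_of_subset_closedBall hδ'.le hJ' hL hJ'L)
  calc volume.real ((⋃ p ∈ J, ball p ρ) ∩ ⋃ p ∈ J', ball p ρ')
    _ ≤ ∑ p ∈ J', volume.real ((⋃ p ∈ J, ball p ρ) ∩ ball p ρ') := by
      rw [inter_iUnion₂]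
      exact measureReal_biUnion_finset_le _ _
    _ ≤ ∑ p ∈ J', 4 * ρ * (ρ' / δ + 1) :=
      Finset.sum_le_sum fun p _ => measureReal_biUnion_ball_inter_ball_le hδ hJ hρ0 hρ p hρ'
    _ = J'.card * (4 * ρ * (ρ' / δ + 1)) := by rw [Finset.sum_const, nsmul_eq_mul]
    _ ≤ (2 * L + δ') / δ' * (4 * ρ * (ρ' / δ + 1)) := by gcongr
    _ = 4 * (2 * L + δ') * (ρ / δ * (ρ' / δ') + ρ / δ * (δ / δ')) := by field_simp

theorem mul_div_le_measureReal_biUnion_biUnion_ball {J : ℕ → Finset ℝ} {δ ρ : ℕ → ℝ} {κ x r : ℝ}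
    {s : Finset ℕ} (hκ : 0 ≤ κ) (hr : 0 < r) (hδ0 : ∀ n, 0 < δ n)
    (hδ : ∀ n, δ (n + 1) ≤ δ n / 2) (hδr : ∀ n ∈ s, δ n ≤ r) (hρ0 : ∀ n, 0 ≤ ρ n)
    (hρ : ∀ n, ρ n ≤ δ n / 2)
    (hsep : ∀ n ∈ s, (J n : Set ℝ).Pairwise fun p p' => δ n < dist p p')
    (hJ : ∀ n ∈ s, (J n : Set ℝ) ⊆ closedBall x (2 * r))
    (hcard : ∀ n ∈ s, κ * r ≤ (J n).card * δ n) (hsum : 1 ≤ ∑ n ∈ s, ρ n / δ n) :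
    κ ^ 2 * r / 30 ≤ volume.real (⋃ n ∈ s, ⋃ p ∈ J n, ball p (ρ n)) := by
  have ha (n) : 0 ≤ ρ n / δ n := div_nonneg (hρ0 n) (hδ0 n).le
  have lower (n) (hn : n ∈ s) :
      2 * κ * r * (ρ n / δ n) ≤ volume.real (⋃ p ∈ J n, ball p (ρ n)) := calc
    _ ≤ 2 * ((J n).card * δ n) * (ρ n / δ n) :=
      mul_le_mul_of_nonneg_right (by linarith [hcard n hn]) (ha n)
    _ = volume.real (⋃ p ∈ J n, ball p (ρ n)) := by
      have := hδ0 n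
      rw [measureReal_biUnion_ball (hsep n hn) (hρ0 n) (hρ n)]
      field_simp
  have pair (n) (hn : n ∈ s) (m) (hm : m ∈ s) (hmn : m ≤ n) :
      volume.real ((⋃ p ∈ J n, ball p (ρ n)) ∩ ⋃ p ∈ J m, ball p (ρ m)) ≤
        20 * r * (ρ n / δ n * (ρ m / δ m) + ρ n / δ n * (1 / 2) ^ (n - m)) := calc
    _ ≤ 4 * (2 * (2 * r) + δ m) * (ρ n / δ n * (ρ m / δ m) + ρ n / δ n * (δ n / δ m)) :=
      measureReal_inter_biUnion_ball_le (hδ0 n) (hδ0 m) (hsep n hn) (hsep m hm) (hρ0 n) (hρ n)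
        (hρ0 m) (by positivity) (hJ m hm)
    _ ≤ 4 * (2 * (2 * r) + r) * (ρ n / δ n * (ρ m / δ m) + ρ n / δ n * (1 / 2) ^ (n - m)) := by
      have hratio : δ n / δ m ≤ (1 / 2) ^ (n - m) :=
        (div_le_iff₀ (hδ0 m)).2 (le_half_pow_mul_of_le_half hδ hmn)
      have := ha n
      have := ha m
      have := hδ0 n
      have := hδ0 m
      gcongr
      exact hδr m hm
    _ = 20 * r * (ρ n / δ n * (ρ m / δ m) + ρ n / δ n * (1 / 2) ^ (n - m)) := by ring
  calc κ ^ 2 * r / 30 = (2 * κ * r) ^ 2 / (6 * (20 * r)) := by field_simp; ring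
    _ ≤ volume.real (⋃ n ∈ s, ⋃ p ∈ J n, ball p (ρ n)) :=
      sq_div_le_measureReal_biUnion volume s
        (fun n _ => (J n).measurableSet_biUnion fun _ _ => measurableSet_ball)
        (fun n _ => (measure_biUnion_lt_top (J n).finite_toSet fun _ _ => measure_ball_lt_top).ne)
        (by positivity) (by positivity) (fun n _ => ha n) hsum lower pair

namespace IsLocallyUbiquitous

variable {R : ℕ → Set ℝ} {δ ρ : ℕ → ℝ}

theorem exists_separated (h : IsLocallyUbiquitous R δ) (hδ0 : ∀ n, 0 < δ n)
    (hδ : Tendsto δ atTop (𝓝 0)) :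
    ∃ κ > 0, ∀ x r, 0 < r → ∀ᶠ n in atTop, ∃ J : Finset ℝ, ↑J ⊆ R n ∩ closedBall x (2 * r) ∧
      (J : Set ℝ).Pairwise (fun p p' => δ n < dist p p') ∧ κ * r ≤ J.card * δ n := by
  obtain ⟨κ, hκ, h⟩ := h
  refine ⟨κ / 4, by positivity, fun x r hr => ?_⟩
  filter_upwards [h x r hr, hδ.eventually_le_const hr] with n hn hδr
  obtain ⟨J, hJ, hsep, hnet⟩ := exists_finset_pairwise_lt_dist_forall_dist_le
    ((isCompact_closedBall x (2 * r)).totallyBounded.subset inter_subset_right) (hδ0 n)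
      (A := R n ∩ closedBall x (2 * r))
  refine ⟨J, hJ, hsep, ?_⟩
  have : κ * r ≤ J.card * (4 * δ n) := calc
    _ ≤ volume.real (closedBall x r ∩ thickening (δ n) (R n)) := hn
    _ ≤ volume.real (⋃ p ∈ J, closedBall p (2 * δ n)) :=
      measureReal_mono (closedBall_inter_thickening_subset hδr hnet)
        (measure_biUnion_lt_top J.finite_toSet fun _ _ => measure_closedBall_lt_top).ne
    _ ≤ ∑ p ∈ J, volume.real (closedBall p (2 * δ n)) := measureReal_biUnion_finset_le _ _
    _ = J.card * (4 * δ n) := by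
      simp only [Real.volume_real_closedBall (mul_nonneg zero_le_two (hδ0 n).le),
        Finset.sum_const, nsmul_eq_mul]
      ring
  linarith

theorem exists_le_measureReal_inter_closedBall_of_le (h : IsLocallyUbiquitous R δ)
    (hδ0 : ∀ n, 0 < δ n) (hδ : ∀ n, δ (n + 1) ≤ δ n / 2) (hρ0 : ∀ n, 0 ≤ ρ n)
    (hρ : ∀ n, ρ n ≤ δ n / 2) (hdiv : ¬Summable fun n => ρ n / δ n) :
    ∃ c > 0, ∀ m x r, 0 < r →
      c * r ≤ volume.real ((⋃ n ≥ m, thickening (ρ n) (R n)) ∩ closedBall x r) := by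
  have hδ_lim := tendsto_zero_of_le_half (fun n => (hδ0 n).le) hδ
  obtain ⟨κ, hκ, h⟩ := h.exists_separated hδ0 hδ_lim
  refine ⟨κ ^ 2 / 90, by positivity, fun m x r hr => ?_⟩
  obtain ⟨n₀, hn₀⟩ := eventually_atTop.1 <| (h x (r / 3) (by positivity)).and <|
    (hδ_lim.eventually_le_const (by positivity : 0 < r / 3)).and (eventually_ge_atTop m)
  choose! J hJ using fun n hn => (hn₀ n hn).1
  obtain ⟨M, hM⟩ := exists_one_le_sum_Ico (fun n => div_nonneg (hρ0 n) (hδ0 n).le) hdiv n₀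
  have le_of_mem {n} (hn : n ∈ Finset.Ico n₀ M) : n₀ ≤ n := (Finset.mem_Ico.1 hn).1
  have hsub : ⋃ n ∈ Finset.Ico n₀ M, ⋃ p ∈ J n, ball p (ρ n) ⊆
      (⋃ n ≥ m, thickening (ρ n) (R n)) ∩ closedBall x r := by
    refine iUnion₂_subset fun n hn => iUnion₂_subset fun p hp => ?_
    obtain ⟨hpR, hpx⟩ := (hJ n (le_of_mem hn)).1 hp
    obtain ⟨-, hδn, hmn⟩ := hn₀ n (le_of_mem hn)
    refine subset_inter (fun y hy => mem_biUnion hmn (mem_thickening_iff.2 ⟨p, hpR, hy⟩))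
      (ball_subset_closedBall.trans (closedBall_subset_closedBall' ?_))
    linarith [mem_closedBall.1 hpx, hρ n, hδ0 n]
  calc κ ^ 2 / 90 * r = κ ^ 2 * (r / 3) / 30 := by ring
    _ ≤ volume.real (⋃ n ∈ Finset.Ico n₀ M, ⋃ p ∈ J n, ball p (ρ n)) :=
      mul_div_le_measureReal_biUnion_biUnion_ball hκ.le (by positivity) hδ0 hδ
        (fun n hn => (hn₀ n (le_of_mem hn)).2.1) hρ0 hρ
        (fun n hn => (hJ n (le_of_mem hn)).2.1)
        (fun n hn => (hJ n (le_of_mem hn)).1.trans inter_subset_right)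
        (fun n hn => (hJ n (le_of_mem hn)).2.2) hM
    _ ≤ volume.real ((⋃ n ≥ m, thickening (ρ n) (R n)) ∩ closedBall x r) :=
      measureReal_mono hsub (measure_ne_top_of_subset inter_subset_right
        measure_closedBall_lt_top.ne)

theorem ae_frequently_mem_thickening_of_le (h : IsLocallyUbiquitous R δ)
    (hδ0 : ∀ n, 0 < δ n) (hδ : ∀ n, δ (n + 1) ≤ δ n / 2) (hρ0 : ∀ n, 0 ≤ ρ n)
    (hρ : ∀ n, ρ n ≤ δ n / 2) (hdiv : ¬Summable fun n => ρ n / δ n) :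
    ∀ᵐ x, ∃ᶠ n in atTop, x ∈ thickening (ρ n) (R n) := by
  obtain ⟨c, hc, hlower⟩ := h.exists_le_measureReal_inter_closedBall_of_le hδ0 hδ hρ0 hρ hdiv
  have tail_full (m : ℕ) : ∀ᵐ x, x ∈ ⋃ n ≥ m, thickening (ρ n) (R n) := by
    refine ae_mem_of_frequently_le_measure_inter_closedBall_div volume
      (isOpen_biUnion fun n _ => isOpen_thickening).measurableSet
      (ENNReal.ofReal_pos.2 (half_pos hc)).ne' fun x => Eventually.frequently ?_
    filter_upwards [self_mem_nhdsWithin] with r (hr : 0 < r)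
    rw [ENNReal.le_div_iff_mul_le (.inl (measure_closedBall_pos volume x hr).ne')
      (.inl measure_closedBall_lt_top.ne), Real.volume_closedBall,
      ← ENNReal.ofReal_mul (half_pos hc).le, ENNReal.ofReal_le_iff_le_toReal
      (measure_ne_top_of_subset inter_subset_right measure_closedBall_lt_top.ne)]
    calc c / 2 * (2 * r) = c * r := by ring
      _ ≤ _ := hlower m x r hr
  filter_upwards [ae_all_iff.2 tail_full] with x hx
  refine frequently_atTop.2 fun m => ?_
  obtain ⟨n, hn, hxn⟩ := mem_iUnion₂.1 (hx m)
  exact ⟨n, hn, hxn⟩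

theorem ae_frequently_mem_thickening (h : IsLocallyUbiquitous R δ)
    (hδ0 : ∀ n, 0 < δ n) (hδ : ∀ n, δ (n + 1) ≤ δ n / 2) (hρ0 : ∀ n, 0 ≤ ρ n)
    (hdiv : ¬Summable fun n => ρ n / δ n) :
    ∀ᵐ x, ∃ᶠ n in atTop, x ∈ thickening (ρ n) (R n) := by
  have hdiv_min : ¬Summable fun n => min (ρ n) (δ n / 2) / δ n := by
    convert not_summable_min (fun n => div_nonneg (hρ0 n) (hδ0 n).le) hdiv one_half_pos
      using 3 with n
    rw [← min_div_div_right (hδ0 n).le, div_div_cancel_left' (hδ0 n).ne', one_div]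
  filter_upwards [h.ae_frequently_mem_thickening_of_le hδ0 hδ
    (fun n => le_min (hρ0 n) (half_pos (hδ0 n)).le) (fun n => min_le_right _ _) hdiv_min] with x hx
  exact hx.mono fun n hn => thickening_mono (min_le_left _ _) _ hn

theorem comp (h : IsLocallyUbiquitous R δ) {φ : ℕ → ℕ} (hφ : Tendsto φ atTop atTop) :
    IsLocallyUbiquitous (R ∘ φ) (δ ∘ φ) := by
  obtain ⟨κ, hκ, h⟩ := h
  exact ⟨κ, hκ, fun x r hr => hφ.eventually (h x r hr)⟩

end IsLocallyUbiquitous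

/-! ### Shifted rationals and Szüsz's theorem -/

/-- The resonant set of inhomogeneous approximation by `γ`: the points `y` solving `q * y ≡ γ`
modulo `1` for some denominator `q` in the block `N ≤ q < 2 * N`. -/
def shiftedRationals (γ : ℝ) (N : ℕ) : Set ℝ :=
  {y | ∃ q : ℕ, N ≤ q ∧ q < 2 * N ∧ ∃ a : ℤ, y = (a + γ) / q}

theorem exists_mem_Ico_mul_modEq {a d : ℤ} (had : IsCoprime a d) (hd : 0 < d) (N s : ℤ) :
    ∃ q ∈ Ico N (N + d), q * a ≡ s [ZMOD d] := by
  obtain ⟨u, v, huv⟩ := had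
  refine ⟨N + (u * s - N) % d, ⟨?_, ?_⟩, ?_⟩
  · linarith [Int.emod_nonneg (u * s - N) hd.ne']
  · linarith [Int.emod_lt_of_pos (u * s - N) hd]
  · calc (N + (u * s - N) % d) * a
      _ ≡ (N + (u * s - N)) * a [ZMOD d] := ((Int.mod_modEq _ d).add_left N).mul_right a
      _ = s + d * (-s * v) := by linear_combination s * huv
      _ ≡ s [ZMOD d] := Int.modEq_add_fac_self

theorem exists_abs_mul_sub_sub_le {α : ℝ} {p : ℚ} {N : ℕ} (hpN : p.den ≤ N)
    (hp : |α - p| ≤ 1 / (p.den * N)) (γ : ℝ) :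
    ∃ q : ℕ, N ≤ q ∧ q < 2 * N ∧ ∃ a : ℤ, |q * α - γ - a| ≤ 5 / (2 * p.den) := by
  have hcop : IsCoprime p.num p.den := Int.isCoprime_iff_gcd_eq_one.2 p.reduced
  obtain ⟨q, ⟨hNq, hqN⟩, hq⟩ := exists_mem_Ico_mul_modEq hcop (Int.natCast_pos.2 p.den_pos) N
    (round (p.den * γ))
  lift q to ℕ using by omega
  obtain ⟨a, ha⟩ := hq.symm.dvd
  refine ⟨q, by omega, by omega, a, ?_⟩
  have : (0 : ℝ) < p.den := mod_cast p.den_pos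
  have : (0 : ℝ) < N := mod_cast p.den_pos.trans_le hpN
  have hqN : (q : ℝ) ≤ 2 * N := by norm_cast; omega
  have ha : (q * p.num - round (p.den * γ) : ℝ) = p.den * a := mod_cast ha
  have hpd : (p.den : ℝ) * p = p.num := mod_cast p.den_mul_eq_num
  have split : p.den * (q * α - γ - a) =
      q * (p.den * (α - p)) - (p.den * γ - round (p.den * γ)) := by
    linear_combination ha + q * hpd
  have hdα : |p.den * (α - p)| ≤ 1 / N := calc
    _ = p.den * |α - p| := by rw [abs_mul, Nat.abs_cast]
    _ ≤ p.den * (1 / (p.den * N)) := by gcongr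
    _ = 1 / N := by field_simp
  rw [le_div_iff₀ (by positivity)]
  calc |q * α - γ - a| * (2 * p.den) = 2 * |p.den * (q * α - γ - a)| := by
        rw [abs_mul, Nat.abs_cast]; ring
    _ ≤ 2 * (|q * (p.den * (α - p))| + |p.den * γ - round (p.den * γ)|) := by
      rw [split]
      gcongr
      exact abs_sub _ _
    _ ≤ 2 * (2 * N * (1 / N) + 1 / 2) := by
      rw [abs_mul, Nat.abs_cast]
      gcongr
      exact abs_sub_round _
    _ = 5 := by field_simp; norm_num

theorem mem_thickening_shiftedRationals {α : ℝ} {p : ℚ} {N : ℕ} (hpN : p.den ≤ N)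
    (hp : |α - p| ≤ 1 / (p.den * N)) (hNp : N < 8 * p.den) (γ : ℝ) :
    α ∈ thickening (20 / N ^ 2) (shiftedRationals γ N) := by
  obtain ⟨q, hNq, hqN, a, ha⟩ := exists_abs_mul_sub_sub_le hpN hp γ
  refine mem_thickening_iff.2 ⟨(a + γ) / q, ⟨q, hNq, hqN, a, rfl⟩, ?_⟩
  have hN : (0 : ℝ) < N := mod_cast p.den_pos.trans_le hpN
  have hNq : (N : ℝ) ≤ q := mod_cast hNq
  have hNp : (N : ℝ) < 8 * p.den := mod_cast hNp
  have hq : (0 : ℝ) < q := hN.trans_le hNq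
  calc dist α ((a + γ) / q) = |q * α - γ - a| / q := by
        rw [Real.dist_eq, ← abs_of_pos hq, ← abs_div, abs_of_pos hq]
        congr 1
        field_simp
        ring
    _ ≤ 5 / (2 * p.den) / N := by gcongr
    _ = 20 / (8 * p.den * N) := by field_simp; norm_num
    _ < 20 / (N * N) := by gcongr
    _ = 20 / N ^ 2 := by rw [sq]

theorem card_Icc_ceil_floor_le {u v : ℝ} (huv : u ≤ v) :
    ((Finset.Icc ⌈u⌉ ⌊v⌋).card : ℝ) ≤ v - u + 1 := by
  have : (((⌊v⌋ + 1 - ⌈u⌉).toNat : ℤ) : ℝ) ≤ v - u + 1 := by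
    rw [Int.toNat_eq_max, Int.cast_max]
    push_cast
    exact max_le (by linarith [Int.floor_le v, Int.le_ceil u]) (by linarith)
  rwa [Int.card_Icc]

theorem measureReal_abs_mul_sub_int_le {d η r : ℝ} (hd : 0 < d) (hη : 0 ≤ η) (hr : 0 ≤ r) (x : ℝ) :
    volume.real ({α | ∃ k : ℤ, |d * α - k| ≤ η} ∩ closedBall x r) ≤
      (2 * d * r + 2 * η + 1) * (2 * (η / d)) := by
  set I := Finset.Icc ⌈d * (x - r) - η⌉ ⌊d * (x + r) + η⌋
  have hcover : {α | ∃ k : ℤ, |d * α - k| ≤ η} ∩ closedBall x r ⊆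
      ⋃ k ∈ I, closedBall (k / d : ℝ) (η / d) := by
    rintro α ⟨⟨k, hk⟩, hαx⟩
    rw [Real.closedBall_eq_Icc] at hαx
    have hlower := mul_le_mul_of_nonneg_left hαx.1 hd.le
    have hupper := mul_le_mul_of_nonneg_left hαx.2 hd.le
    obtain ⟨hk1, hk2⟩ := abs_le.1 hk
    refine mem_biUnion (x := k) (Finset.mem_Icc.2 ⟨Int.ceil_le.2 ?_, Int.le_floor.2 ?_⟩) ?_
    · linarith
    · linarith
    · calc dist α (k / d) = |d * α - k| / d := by
            rw [Real.dist_eq, ← abs_of_pos hd, ← abs_div, abs_of_pos hd]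
            congr 1
            field_simp
        _ ≤ η / d := by gcongr
  have hcard : (I.card : ℝ) ≤ 2 * d * r + 2 * η + 1 :=
    (card_Icc_ceil_floor_le (by nlinarith)).trans_eq (by ring)
  calc volume.real ({α | ∃ k : ℤ, |d * α - k| ≤ η} ∩ closedBall x r)
    _ ≤ volume.real (⋃ k ∈ I, closedBall (k / d : ℝ) (η / d)) := measureReal_mono hcover
      (measure_biUnion_lt_top I.finite_toSet fun _ _ => measure_closedBall_lt_top).ne
    _ ≤ ∑ k ∈ I, volume.real (closedBall (k / d : ℝ) (η / d)) := measureReal_biUnion_finset_le _ _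
    _ = I.card * (2 * (η / d)) := by
      simp only [Real.volume_real_closedBall (div_nonneg hη hd.le), Finset.sum_const, nsmul_eq_mul]
    _ ≤ (2 * d * r + 2 * η + 1) * (2 * (η / d)) := by gcongr

/-- The points with a rational approximation, of Dirichlet quality at level `N`, whose denominator
`d + 1` is at most `N / 8`. Away from them the denominators supplied by Dirichlet's theorem are
comparable to `N`. -/
def smallDenominatorSet (N : ℕ) : Set ℝ :=
  ⋃ d ∈ Finset.range (N / 8), {α | ∃ k : ℤ, |((d : ℝ) + 1) * α - k| ≤ 1 / N}

theorem mem_thickening_shiftedRationals_of_notMem {N : ℕ} (hN : 0 < N) {α : ℝ}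
    (hα : α ∉ smallDenominatorSet N) (γ : ℝ) :
    α ∈ thickening (20 / N ^ 2) (shiftedRationals γ N) := by
  obtain ⟨p, hp, hpN⟩ := Real.exists_rat_abs_sub_le_and_den_le α hN
  have hd : (0 : ℝ) < p.den := mod_cast p.den_pos
  have : (0 : ℝ) < N := mod_cast hN
  have hp : |α - p| ≤ 1 / (p.den * N) := hp.trans (by gcongr 1 / ?_; nlinarith)
  refine mem_thickening_shiftedRationals hpN hp (lt_of_not_ge fun hle => hα ?_) γ
  refine mem_biUnion (x := p.den - 1) (Finset.mem_range.2 (by have := p.den_pos; omega)) ?_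
  have hpd : (p.den : ℝ) * p = p.num := mod_cast p.den_mul_eq_num
  refine ⟨p.num, ?_⟩
  rw [Nat.cast_pred p.den_pos, sub_add_cancel]
  calc |p.den * α - p.num| = p.den * |α - p| := by
        rw [← hpd, ← mul_sub, abs_mul, Nat.abs_cast]
    _ ≤ p.den * (1 / (p.den * N)) := by gcongr
    _ = 1 / N := by field_simp

theorem measureReal_smallDenominatorSet_inter_closedBall_le {N : ℕ} (hN : 0 < N) (x : ℝ) {r : ℝ}
    (hr : 0 ≤ r) :
    volume.real (smallDenominatorSet N ∩ closedBall x r) ≤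
      r / 2 + 6 * ((N : ℝ)⁻¹ * ∑ d ∈ Finset.range N, 1 / ((d : ℝ) + 1)) := by
  have hN' : (1 : ℝ) ≤ N := mod_cast hN
  have term (d : ℕ) : volume.real ({α | ∃ k : ℤ, |((d : ℝ) + 1) * α - k| ≤ 1 / N} ∩ closedBall x r)
      ≤ 4 * r / N + 6 * ((N : ℝ)⁻¹ * (1 / (d + 1))) := calc
    _ ≤ (2 * (d + 1) * r + 2 * (1 / N) + 1) * (2 * (1 / N / (d + 1))) :=
      measureReal_abs_mul_sub_int_le (by positivity) (by positivity) hr x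
    _ ≤ (2 * (d + 1) * r + 2 * 1 + 1) * (2 * (1 / N / (d + 1))) := by
      gcongr
      exact (div_le_one (by positivity)).2 hN'
    _ = 4 * r / N + 6 * ((N : ℝ)⁻¹ * (1 / (d + 1))) := by field_simp; ring
  rw [smallDenominatorSet, iUnion₂_inter]
  calc volume.real _
    _ ≤ ∑ d ∈ Finset.range (N / 8), (4 * r / N + 6 * ((N : ℝ)⁻¹ * (1 / ((d : ℝ) + 1)))) :=
      (measureReal_biUnion_finset_le _ _).trans (Finset.sum_le_sum fun d _ => term d)
    _ = (N / 8 : ℕ) * (4 * r / N) +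
        6 * ((N : ℝ)⁻¹ * ∑ d ∈ Finset.range (N / 8), 1 / ((d : ℝ) + 1)) := by
      rw [Finset.sum_add_distrib, Finset.sum_const, Finset.card_range, nsmul_eq_mul,
        ← Finset.mul_sum, ← Finset.mul_sum]
    _ ≤ N / 8 * (4 * r / N) + 6 * ((N : ℝ)⁻¹ * ∑ d ∈ Finset.range N, 1 / ((d : ℝ) + 1)) := by
      gcongr
      · exact Nat.cast_div_le
      · exact Nat.div_le_self N 8
    _ = r / 2 + 6 * ((N : ℝ)⁻¹ * ∑ d ∈ Finset.range N, 1 / ((d : ℝ) + 1)) := by field_simp; ring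

theorem isLocallyUbiquitous_shiftedRationals (γ : ℝ) :
    IsLocallyUbiquitous (shiftedRationals γ) fun N => 20 / (N : ℝ) ^ 2 := by
  refine ⟨1, one_pos, fun x r hr => ?_⟩
  have cesaro := (tendsto_one_div_add_atTop_nhds_zero_nat (𝕜 := ℝ)).cesaro
  filter_upwards [cesaro.eventually_le_const (by positivity : 0 < r / 12), eventually_gt_atTop 0]
    with N hmean hN
  have hcover : closedBall x r ⊆ (smallDenominatorSet N ∩ closedBall x r) ∪
      (closedBall x r ∩ thickening (20 / (N : ℝ) ^ 2) (shiftedRationals γ N)) := fun α hα => by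
    by_cases hαN : α ∈ smallDenominatorSet N
    · exact .inl ⟨hαN, hα⟩
    · exact .inr ⟨hα, mem_thickening_shiftedRationals_of_notMem hN hαN γ⟩
  have hball : volume.real (closedBall x r) ≤ _ := (measureReal_mono hcover
    (measure_ne_top_of_subset (union_subset inter_subset_right inter_subset_left)
      measure_closedBall_lt_top.ne)).trans (measureReal_union_le _ _)
  rw [Real.volume_real_closedBall hr.le] at hball
  linarith [measureReal_smallDenominatorSet_inter_closedBall_le hN x hr.le]

theorem distNearestInt_natCast_mul_sub (q : ℕ) (α γ : ℝ) :
    distNearestInt (q * α - γ) = ‖q • (α : UnitAddCircle) - γ‖ := by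
  rw [distNearestInt, ← UnitAddCircle.norm_eq, AddCircle.coe_sub, ← nsmul_eq_mul,
    AddCircle.coe_nsmul]

theorem exists_norm_nsmul_sub_lt_of_mem_thickening {ψ : ℕ → ℝ} (hψ0 : ∀ q, 0 ≤ ψ q)
    (hψ : AntitoneOn ψ (Ici 1)) {N : ℕ} {γ α : ℝ}
    (hα : α ∈ thickening (ψ (2 * N) / (2 * N)) (shiftedRationals γ N)) :
    ∃ q ≥ N, ‖q • (α : UnitAddCircle) - γ‖ < ψ q := by
  obtain ⟨_, ⟨q, hNq, hqN, a, rfl⟩, hdist⟩ := mem_thickening_iff.1 hα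
  have hq : (0 : ℝ) < q := mod_cast (by omega : 0 < q)
  have hqN' : (q : ℝ) ≤ 2 * N := mod_cast hqN.le
  refine ⟨q, hNq, ?_⟩
  calc ‖q • (α : UnitAddCircle) - γ‖ ≤ |q * α - γ - a| := by
        rw [← distNearestInt_natCast_mul_sub]; exact round_le _ a
    _ = q * dist α ((a + γ) / q) := by
      rw [Real.dist_eq, ← Nat.abs_cast, ← abs_mul, Nat.abs_cast]
      congr 1
      field_simp
      ring
    _ < q * (ψ (2 * N) / (2 * N)) := by gcongr
    _ ≤ 2 * N * (ψ (2 * N) / (2 * N)) := by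
      have := hψ0 (2 * N)
      gcongr
    _ = ψ (2 * N) := mul_div_cancel₀ _ (hq.trans_le hqN').ne'
    _ ≤ ψ q := hψ (mem_Ici.2 (by omega)) (mem_Ici.2 (by omega)) hqN.le

-- Szüsz's theorem.
theorem ae_frequently_norm_nsmul_sub_lt {ψ : ℕ → ℝ} (hψ0 : ∀ q, 0 ≤ ψ q)
    (hψ : AntitoneOn ψ (Ici 1)) (hdiv : ¬Summable ψ) (γ : ℝ) :
    ∀ᵐ α : ℝ, ∃ᶠ q : ℕ in atTop, ‖q • (α : UnitAddCircle) - γ‖ < ψ q := by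
  have ubiquity := (isLocallyUbiquitous_shiftedRationals γ).comp
    (tendsto_pow_atTop_atTop_of_one_lt one_lt_two)
  have hdiv_dyadic : ¬Summable fun n : ℕ =>
      ψ (2 * 2 ^ n) / (2 * (2 ^ n : ℕ)) / (20 / ((2 ^ n : ℕ) : ℝ) ^ 2) := by
    rw [← summable_condensed_iff_of_nonneg hψ0 fun m n hm hmn => hψ hm (hm.trans_le hmn) hmn,
      ← summable_nat_add_iff 1, ← summable_mul_left_iff (by norm_num : (1 / 80 : ℝ) ≠ 0)] at hdiv
    refine fun h => hdiv (h.congr fun n => ?_)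
    rw [← pow_succ']
    push_cast [pow_succ']
    field_simp
    ring
  have hhalf (n : ℕ) : 20 / ((2 ^ (n + 1) : ℕ) : ℝ) ^ 2 ≤ 20 / ((2 ^ n : ℕ) : ℝ) ^ 2 / 2 := by
    push_cast [pow_succ]
    field_simp
    norm_num
  filter_upwards [ubiquity.ae_frequently_mem_thickening (fun n => by simp) hhalf
    (fun n => div_nonneg (hψ0 _) (by positivity)) hdiv_dyadic] with α hα
  refine frequently_atTop.2 fun m => ?_
  obtain ⟨n, hmn, hαn⟩ := frequently_atTop.1 hα m
  obtain ⟨q, hnq, hq⟩ := exists_norm_nsmul_sub_lt_of_mem_thickening hψ0 hψ hαn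
  exact ⟨q, (hmn.trans n.lt_two_pow_self.le).trans hnq, hq⟩

/-! ### Perturbing the shift -/

theorem measurePreserving_nsmul_coe_unitAddCircle {q : ℕ} (hq : q ≠ 0) :
    MeasurePreserving (fun α : ℝ => q • (α : UnitAddCircle)) (volume.restrict (Ioc 0 1)) := by
  have quotient : MeasurePreserving ((↑) : ℝ → UnitAddCircle) (volume.restrict (Ioc 0 (0 + 1))) :=
    UnitAddCircle.measurePreserving_mk 0
  rw [zero_add] at quotient
  simpa only [Function.comp_def, natCast_zsmul] using
    (Measure.measurePreserving_zsmul volume (Int.natCast_ne_zero.2 hq)).comp quotient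

theorem norm_coe_unitAddCircle_le (x : ℝ) : ‖(x : UnitAddCircle)‖ ≤ |x| := by
  simpa only [UnitAddCircle.norm_eq, Int.cast_zero, sub_zero] using round_le x 0

theorem exists_coe_eq_and_abs_eq_norm (z : UnitAddCircle) :
    ∃ x : ℝ, (x : UnitAddCircle) = z ∧ |x| = ‖z‖ := by
  obtain ⟨x, rfl⟩ := QuotientAddGroup.mk_surjective z
  refine ⟨x - round x, ?_, UnitAddCircle.norm_eq.symm⟩
  rw [AddCircle.coe_sub]
  simp

theorem volume_annulus_le (z₀ : UnitAddCircle) (p : ℝ) {ε : ℝ} (hε : 0 ≤ ε) :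
    volume {z : UnitAddCircle | p - ε ≤ ‖z - z₀‖ ∧ ‖z - z₀‖ < p} ≤ ENNReal.ofReal (2 * ε) := by
  set c : UnitAddCircle := ↑(p - ε / 2)
  have hcover : {z : UnitAddCircle | p - ε ≤ ‖z - z₀‖ ∧ ‖z - z₀‖ < p} ⊆
      closedBall (z₀ + c) (ε / 2) ∪ closedBall (z₀ - c) (ε / 2) := by
    rintro z ⟨hinner, houter⟩
    obtain ⟨x, hx, hx_abs⟩ := exists_coe_eq_and_abs_eq_norm (z - z₀)
    rw [← hx_abs] at hinner houter
    rcases abs_cases x with ⟨hx_eq, -⟩ | ⟨hx_eq, -⟩ <;> rw [hx_eq] at hinner houter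
    · refine .inl ?_
      calc dist z (z₀ + c) = ‖((x - (p - ε / 2) : ℝ) : UnitAddCircle)‖ := by
            rw [dist_eq_norm, AddCircle.coe_sub, hx, sub_sub]
        _ ≤ |x - (p - ε / 2)| := norm_coe_unitAddCircle_le _
        _ ≤ ε / 2 := abs_le.2 ⟨by linarith, by linarith⟩
    · refine .inr ?_
      calc dist z (z₀ - c) = ‖((x + (p - ε / 2) : ℝ) : UnitAddCircle)‖ := by
            rw [dist_eq_norm, AddCircle.coe_add, hx, sub_sub_eq_add_sub, sub_add_eq_add_sub]
        _ ≤ |x + (p - ε / 2)| := norm_coe_unitAddCircle_le _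
        _ ≤ ε / 2 := abs_le.2 ⟨by linarith, by linarith⟩
  have hball (z : UnitAddCircle) : volume (closedBall z (ε / 2)) ≤ ENNReal.ofReal ε := by
    rw [AddCircle.volume_closedBall]
    exact ENNReal.ofReal_le_ofReal ((min_le_right _ _).trans_eq (by ring))
  calc volume {z : UnitAddCircle | p - ε ≤ ‖z - z₀‖ ∧ ‖z - z₀‖ < p}
    _ ≤ volume (closedBall (z₀ + c) (ε / 2)) + volume (closedBall (z₀ - c) (ε / 2)) :=
      (measure_mono hcover).trans (measure_union_le _ _)
    _ ≤ ENNReal.ofReal ε + ENNReal.ofReal ε := add_le_add (hball _) (hball _)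
    _ = ENNReal.ofReal (2 * ε) := by rw [← ENNReal.ofReal_add hε hε, two_mul]

theorem ae_eventually_nsmul_notMem_annulus (z₀ : UnitAddCircle) (ψ : ℕ → ℝ) {ε : ℕ → ℝ}
    (hε0 : ∀ q, 0 ≤ ε q) (hε : Summable ε) :
    ∀ᵐ α : ℝ ∂volume.restrict (Ioc 0 1), ∀ᶠ q : ℕ in atTop,
      ¬(ψ q - ε q ≤ ‖q • (α : UnitAddCircle) - z₀‖ ∧ ‖q • (α : UnitAddCircle) - z₀‖ < ψ q) := by
  set annulus : ℕ → Set UnitAddCircle := fun q => {z | ψ q - ε q ≤ ‖z - z₀‖ ∧ ‖z - z₀‖ < ψ q}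
  have annulus_meas (q) : MeasurableSet (annulus q) :=
    (by fun_prop : Measurable fun z : UnitAddCircle => ‖z - z₀‖) measurableSet_Ico
  set s : ℕ → Set ℝ := fun q => {α | q ≠ 0 ∧ q • (α : UnitAddCircle) ∈ annulus q}
  have hs (q : ℕ) : volume.restrict (Ioc 0 1) (s q) ≤ ENNReal.ofReal (2 * ε q) := by
    rcases eq_or_ne q 0 with rfl | hq
    · simp [s]
    · calc volume.restrict (Ioc 0 1) (s q)
        _ ≤ volume.restrict (Ioc 0 1) ((fun α : ℝ => q • (α : UnitAddCircle)) ⁻¹' annulus q) :=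
          measure_mono fun α hα => hα.2
        _ = volume (annulus q) := (measurePreserving_nsmul_coe_unitAddCircle hq).measure_preimage
          (annulus_meas q).nullMeasurableSet
        _ ≤ ENNReal.ofReal (2 * ε q) := volume_annulus_le z₀ (ψ q) (hε0 q)
  filter_upwards [ae_eventually_notMem (ne_top_of_le_ne_top (hε.mul_left 2).tsum_ofReal_ne_top
    (ENNReal.tsum_le_tsum hs))] with α hα
  filter_upwards [hα, eventually_ne_atTop 0] with q hq hq0 hmem
  exact hq ⟨hq0, hmem⟩

theorem ae_frequently_norm_nsmul_sub_lt_of_summable {ψ : ℕ → ℝ} {z : ℕ → UnitAddCircle}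
    {z₀ : UnitAddCircle} (hz : Summable fun q => ‖z q - z₀‖)
    (h : ∀ᵐ α : ℝ ∂volume.restrict (Ioc 0 1),
      ∃ᶠ q : ℕ in atTop, ‖q • (α : UnitAddCircle) - z₀‖ < ψ q) :
    ∀ᵐ α : ℝ ∂volume.restrict (Ioc 0 1),
      ∃ᶠ q : ℕ in atTop, ‖q • (α : UnitAddCircle) - z q‖ < ψ q := by
  filter_upwards [h, ae_eventually_nsmul_notMem_annulus z₀ ψ (fun q => norm_nonneg _) hz]
    with α hfreq hev
  refine (hfreq.and_eventually hev).mono fun q ⟨hlt, hannulus⟩ => ?_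
  have : ‖q • (α : UnitAddCircle) - z₀‖ < ψ q - ‖z q - z₀‖ :=
    lt_of_not_ge fun hle => hannulus ⟨hle, hlt⟩
  have := norm_sub_le_norm_sub_add_norm_sub (q • (α : UnitAddCircle)) z₀ (z q)
  rw [norm_sub_rev z₀] at this
  linarith

theorem stmt18 (ψ : ℕ → ℝ) (hψ0 : ∀ q, 0 ≤ ψ q)
    (hψdec : ∀ q r : ℕ, 1 ≤ q → q ≤ r → ψ r ≤ ψ q)
    (hdiv : ¬ Summable ψ)
    (γ : ℕ → ℝ) (γ₀ : ℝ)
    (hγ : Summable (fun q : ℕ => |γ q - γ₀|)) :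
    volume (WSet ψ γ) = 1 := by
  have hγ_circle : Summable fun q => ‖(γ q - γ₀ : UnitAddCircle)‖ :=
    hγ.of_nonneg_of_le (fun q => norm_nonneg _) fun q => norm_coe_unitAddCircle_le (γ q - γ₀)
  have szusz := ae_frequently_norm_nsmul_sub_lt hψ0 (fun q hq r _ => hψdec q r hq) hdiv γ₀
  have perturbed := (ae_restrict_iff' measurableSet_Ioc).1 <|
    ae_frequently_norm_nsmul_sub_lt_of_summable hγ_circle (ae_restrict_of_ae szusz)
  refine le_antisymm ?_ ?_
  · calc volume (WSet ψ γ) ≤ volume (Icc (0 : ℝ) 1) := measure_mono fun α hα => hα.1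
      _ = 1 := by simp
  · calc 1 = volume (Ioc (0 : ℝ) 1) := by simp
      _ ≤ volume (WSet ψ γ) := measure_mono_ae <| by
        filter_upwards [perturbed] with α hα hα01
        refine ⟨Ioc_subset_Icc_self hα01, Nat.frequently_atTop_iff_infinite.1 ?_⟩
        refine ((hα hα01).and_eventually (eventually_ge_atTop 1)).mono fun q ⟨hlt, hq⟩ => ⟨hq, ?_⟩
        rwa [distNearestInt_natCast_mul_sub]
end

section
/- Suppose 𝒬 ⊆ ℝ is a dense set with the property that for every sequence σ=(σ_q)_{q≥1} with all σ_q ∈ 𝒬 and every decreasing ψ:ℕ→ℝ≥0 with ∑_{q=1}^∞ ψ(q) = ∞ one has meas(W(ψ,σ)) = 1. Then for every sequence γ=(γ_q)_{q≥1} of real numbers and every decreasing ψ:ℕ→ℝ≥0 with ∑_{q=1}^∞ ψ(q) = ∞, one has meas(W(ψ,γ)) = 1. -/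
open MeasureTheory

/-!
Since `x ↦ ‖x‖` is `1`-Lipschitz, moving `γ q` to a point `σ q ∈ 𝒬` at distance less than `ψ q / 2`
costs at most half of the approximation radius, so `WSet (ψ / 2) σ ⊆ WSet ψ γ`. Such points exist
because a nonnegative decreasing sequence with divergent sum has no zero term, and `ψ / 2` is again
decreasing with divergent sum.
-/

theorem pos_of_antitoneOn_Ici_of_not_summable {f : ℕ → ℝ} {a : ℕ} (hf : AntitoneOn f (Set.Ici a))
    (hf_nonneg : ∀ n, a ≤ n → 0 ≤ f n) (hf_div : ¬ Summable f) {n : ℕ} (hn : a ≤ n) : 0 < f n := by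
  contrapose! hf_div with hfn
  refine summable_of_ne_finset_zero (s := Finset.range n) fun m hm ↦ ?_
  have hnm : n ≤ m := by simpa only [Finset.mem_range, not_lt] using hm
  have ham : a ≤ m := hn.trans hnm
  exact le_antisymm ((hf hn ham hnm).trans hfn) (hf_nonneg m ham)

theorem lipschitzWith_distNearestInt : LipschitzWith 1 distNearestInt :=
  LipschitzWith.of_le_add fun x y ↦
    calc |x - round x| ≤ |x - round y| := round_le x (round y)
      _ ≤ |x - y| + |y - round y| := abs_sub_le x y (round y)
      _ = |y - round y| + dist x y := by rw [add_comm, Real.dist_eq]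

namespace WSet

variable {φ ψ σ γ : ℕ → ℝ}

theorem volume_le_one (ψ γ : ℕ → ℝ) : volume (WSet ψ γ) ≤ 1 :=
  calc volume (WSet ψ γ) ≤ volume (Set.Icc (0 : ℝ) 1) := measure_mono fun _ hα ↦ hα.1
    _ = 1 := by simp

theorem subset_of_add_dist_le (h : ∀ q, 1 ≤ q → φ q + dist (γ q) (σ q) ≤ ψ q) :
    WSet φ σ ⊆ WSet ψ γ := by
  rintro α ⟨hα, hα_inf⟩
  refine ⟨hα, hα_inf.mono ?_⟩
  rintro q ⟨hq, hq_lt⟩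
  refine ⟨hq, ?_⟩
  calc distNearestInt (q * α - γ q)
      ≤ distNearestInt (q * α - σ q) + dist (q * α - γ q) (q * α - σ q) := by
        simpa only [NNReal.coe_one, one_mul] using lipschitzWith_distNearestInt.le_add_mul _ _
    _ = distNearestInt (q * α - σ q) + dist (γ q) (σ q) := by rw [dist_sub_left]
    _ < φ q + dist (γ q) (σ q) := by gcongr
    _ ≤ ψ q := h q hq

theorem exists_subset_of_dense {𝒬 : Set ℝ} (h𝒬 : Dense 𝒬) (γ : ℕ → ℝ)
    (hφψ : ∀ q, 1 ≤ q → φ q < ψ q) :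
    ∃ σ : ℕ → ℝ, (∀ q, 1 ≤ q → σ q ∈ 𝒬) ∧ WSet φ σ ⊆ WSet ψ γ := by
  have h_near (q : ℕ) (hq : 1 ≤ q) : ∃ s ∈ 𝒬, dist (γ q) s < ψ q - φ q :=
    h𝒬.exists_dist_lt (γ q) (sub_pos.mpr (hφψ q hq))
  choose! σ hσ_mem hσ_dist using h_near
  exact ⟨σ, hσ_mem, subset_of_add_dist_le fun q hq ↦ (lt_sub_iff_add_lt'.mp (hσ_dist q hq)).le⟩

end WSet

theorem stmt19 (𝒬 : Set ℝ) (hdense : Dense 𝒬)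
    (h𝒬 : ∀ σ : ℕ → ℝ, (∀ q : ℕ, 1 ≤ q → σ q ∈ 𝒬) →
      ∀ ψ : ℕ → ℝ, (∀ q, 0 ≤ ψ q) → (∀ q r : ℕ, 1 ≤ q → q ≤ r → ψ r ≤ ψ q) →
        ¬ Summable ψ → volume (WSet ψ σ) = 1)
    (γ : ℕ → ℝ) (ψ : ℕ → ℝ) (hψ0 : ∀ q, 0 ≤ ψ q)
    (hψdec : ∀ q r : ℕ, 1 ≤ q → q ≤ r → ψ r ≤ ψ q)
    (hdiv : ¬ Summable ψ) :
    volume (WSet ψ γ) = 1 := by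
  have hψ_pos (q : ℕ) (hq : 1 ≤ q) : 0 < ψ q :=
    pos_of_antitoneOn_Ici_of_not_summable (fun q hq r _ hqr ↦ hψdec q r hq hqr)
      (fun q _ ↦ hψ0 q) hdiv hq
  obtain ⟨σ, hσ_mem, hσ_sub⟩ :=
    WSet.exists_subset_of_dense hdense γ fun q hq ↦ half_lt_self (hψ_pos q hq)
  have h_half_div : ¬ Summable fun q ↦ ψ q / 2 := by
    rwa [summable_div_const_iff two_ne_zero]
  have h_half : volume (WSet (fun q ↦ ψ q / 2) σ) = 1 :=
    h𝒬 σ hσ_mem _ (fun q ↦ div_nonneg (hψ0 q) zero_le_two)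
      (fun q r hq hqr ↦ div_le_div_of_nonneg_right (hψdec q r hq hqr) zero_le_two) h_half_div
  exact le_antisymm (WSet.volume_le_one ψ γ) (h_half.symm.trans_le (measure_mono hσ_sub))
end
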